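/- Let d_f = log 3 / log 2 and let μ_n = 3^{−n} Σ_{x∈V_n} δ_x be the measure assigning mass 3^{−n} to each point of V_n. Then 0 < H^{d_f}(V) < ∞ for the d_f-dimensional Hausdorff measure H^{d_f}, and there exists a constant c ∈ (0,∞) such that the sequence of measures μ_n converges weakly to c · H^{d_f} restricted to V. -/

import Mathlib

open Set MeasureTheory Filter Topology
open scoped Classical ENNReal NNReal BoundedContinuousFunction

noncomputable section

/-- The plane, with the Euclidean norm. -/
abbrev Pt : Type := EuclideanSpace ℝ (Fin 2)

/-- The three vertexes of the initial equilateral triangle. -/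
def ptA : Fin 3 → Pt
  | 0 => (WithLp.equiv 2 (Fin 2 → ℝ)).symm ![0, 0]
  | 1 => (WithLp.equiv 2 (Fin 2 → ℝ)).symm ![1, 0]
  | 2 => (WithLp.equiv 2 (Fin 2 → ℝ)).symm ![1 / 2, Real.sqrt 3 / 2]

/-- The contraction `fᵢ(z) = (z + aᵢ)/2`. -/
def sgMap (i : Fin 3) (z : Pt) : Pt := (2 : ℝ)⁻¹ • (z + ptA i)

/-- The vertex sets `V_n`. -/
def Vn : ℕ → Finset Pt
  | 0 => {ptA 0, ptA 1, ptA 2}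
  | n + 1 => (Vn n).image (sgMap 0) ∪ (Vn n).image (sgMap 1) ∪ (Vn n).image (sgMap 2)

/-- `V* = ⋃ₙ Vₙ`. -/
def Vstar : Set Pt := ⋃ n, (Vn n : Set Pt)

/-- The Sierpinski gasket `V`, the closure of `V*`. -/
def sg : Set Pt := closure Vstar

lemma Vstar_subset_sg {x : Pt} (hx : x ∈ Vstar) : x ∈ sg :=
  subset_closure hx

lemma Vn_subset_sg {n : ℕ} {x : Pt} (hx : x ∈ Vn n) : x ∈ sg :=
  subset_closure (Set.mem_iUnion.mpr ⟨n, hx⟩)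

/-- `{x,y}` is an edge of the graph `Γₙ`. -/
def isEdge (n : ℕ) (x y : Pt) : Prop := ‖x - y‖ = (2 : ℝ) ^ (-(n : ℤ))

/-- The discrete energy form `𝓔ₙ(u,v) = (5/3)ⁿ Σ_{{x,y}∈Eₙ} (u(y)-u(x))(v(y)-v(x))`;
the sum over unordered pairs is written as half the sum over ordered pairs. -/
def energyBi (n : ℕ) (u v : Pt → ℝ) : ℝ :=
  (5 / 3 : ℝ) ^ n * (1 / 2) *
    ∑ x ∈ Vn n, ∑ y ∈ Vn n, if isEdge n x y then (u y - u x) * (v y - v x) else 0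

/-- The discrete energy `𝓔ₙ(u,u)`. -/
def energy (n : ℕ) (u : Pt → ℝ) : ℝ := energyBi n u u

/-- The discrete Laplacian `Δₙ g(x) = 5ⁿ Σ_{y:{x,y}∈Eₙ} (g(y)-g(x))`. -/
def discLap (n : ℕ) (g : Pt → ℝ) (x : Pt) : ℝ :=
  (5 : ℝ) ^ n * ∑ y ∈ Vn n, if isEdge n x y then g y - g x else 0

/-- A function on `V*` has finite energy if `supₙ 𝓔ₙ(u,u) < ∞`. -/
def FiniteEnergy (u : Pt → ℝ) : Prop := BddAbove (Set.range fun n => energy n u)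

/-- The empirical vertex measure `μₙ`, giving mass `3⁻ⁿ` to each point of `Vₙ`. -/
def empMeas (n : ℕ) : Measure Pt :=
  ((3 : ℝ≥0∞) ^ n)⁻¹ • ∑ x ∈ Vn n, Measure.dirac x

/-- Extension by zero of a continuous function on the gasket. -/
def sgExt (f : C(sg, ℝ)) (x : Pt) : ℝ := if hx : x ∈ sg then f ⟨x, hx⟩ else 0

/-- `h(k)! = h(1)⋯h(k)`, with `h(0)! = 1`. -/
def hfact (h : ℕ → ℝ) (k : ℕ) : ℝ := ∏ i ∈ Finset.range k, h (i + 1)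

/-- The partition function `Z(φ) = Σₖ φᵏ/h(k)!`. -/
def Zfun (h : ℕ → ℝ) (φ : ℝ) : ℝ := ∑' k, φ ^ k / hfact h k

/-- The one-site marginal `p_φ(k) = Z(φ)⁻¹ φᵏ/h(k)!`. -/
def pmarg (h : ℕ → ℝ) (φ : ℝ) (k : ℕ) : ℝ := (Zfun h φ)⁻¹ * φ ^ k / hfact h k

/-- The mean of the one-site marginal `p_φ`. -/
def meanFun (h : ℕ → ℝ) (φ : ℝ) : ℝ := ∑' k : ℕ, (k : ℝ) * pmarg h φ k

/-- The zero-range generator on `Ωₙ = ℕ^{Vₙ}`, summing over ordered pairs `(x,y)`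
with `{x,y} ∈ Eₙ`. -/
def zrGen (n : ℕ) (h : ℕ → ℝ) (F : (↥(Vn n) → ℕ) → ℝ) (η : ↥(Vn n) → ℕ) : ℝ :=
  ∑ x : ↥(Vn n), ∑ y : ↥(Vn n),
    if isEdge n x.1 y.1 then
      h (η x) * (F (Function.update (Function.update η x (η x - 1)) y (η y + 1)) - F η)
    else 0

/-!
The gasket is the attractor of three contractions of ratio `1/2`, and `3 * (1/2) ^ d = 1` for
`d = log 3 / log 2`. Covering it by its `3 ^ n` cells of level `n` bounds its `d`-dimensional
Hausdorff measure from above. For the lower bound, let `ν` be the law of the point coded by a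
uniformly random infinite word. The images of the open triangle are disjoint, so by comparison of
areas a set of diameter at most `2 ^ (-k)` meets boundedly many cells of level `k`; its `ν`-mass is
then `O(3 ^ (-k))`, whence `ν ≪ μH[d]`.

For the convergence, let `T g x` be the average of the values `g (fᵢ x)`. A point of `Vₙ` belongs to
two cells of level `n`, except for the three corners, which belong to one; counting with
multiplicity gives `2 * ∑_{Vₙ} g = 3 ^ n * ∑ᵢ (T ^ n g) (aᵢ) + ∑ᵢ g (aᵢ)`. The operator `T`
preserves the integral against `μH[d]` on the gasket, because the cells overlap in single points,
and it shrinks oscillations, so `T ^ n g` converges uniformly to the mean of `g`, and `∫ g dμₙ`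
converges to `3 / 2` times that mean.
-/

section Words

variable {ι X : Type*} {f : ι → X → X} {K U : Set X}

/-- The composition `f_{w 0} ∘ ⋯ ∘ f_{w (n - 1)}` of the maps of an iterated function system `f`
along a word `w` of length `n`; the image of an invariant set under it is a cell of level `n`. -/
def wordMap (f : ι → X → X) : {n : ℕ} → (Fin n → ι) → X → X
  | 0, _ => id
  | _ + 1, w => f (w 0) ∘ wordMap f (Fin.tail w)

lemma mapsTo_wordMap (hf : ∀ i, MapsTo (f i) K K) :
    ∀ {n : ℕ} (w : Fin n → ι), MapsTo (wordMap f w) K K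
  | 0, _ => mapsTo_id K
  | _ + 1, w => (hf (w 0)).comp (mapsTo_wordMap hf (Fin.tail w))

lemma subset_iUnion_wordMap_image (hK : K ⊆ ⋃ i, f i '' K) :
    ∀ n : ℕ, K ⊆ ⋃ w : Fin n → ι, wordMap f w '' K
  | 0 => fun x hx => mem_iUnion.2 ⟨Fin.elim0, x, hx, rfl⟩
  | n + 1 => fun x hx => by
    obtain ⟨i, y, hy, rfl⟩ := mem_iUnion.1 (hK hx)
    obtain ⟨w, z, hz, rfl⟩ := mem_iUnion.1 (subset_iUnion_wordMap_image hK n hy)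
    exact mem_iUnion.2 ⟨Fin.cons i w, z, hz, by
      simp only [wordMap, Fin.cons_zero, Fin.tail_cons, Function.comp_apply]⟩

lemma pairwise_disjoint_wordMap_image (hinj : ∀ i, Function.Injective (f i))
    (hf : ∀ i, MapsTo (f i) U U) (hdisj : Pairwise fun i j => Disjoint (f i '' U) (f j '' U)) :
    ∀ n : ℕ, Pairwise fun v w : Fin n → ι => Disjoint (wordMap f v '' U) (wordMap f w '' U)
  | 0 => fun v w hvw => (hvw (Subsingleton.elim v w)).elim
  | n + 1 => fun v w hvw => by
    simp only [wordMap, image_comp]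
    by_cases h0 : v 0 = w 0
    · rw [h0, disjoint_image_iff (hinj _)]
      refine pairwise_disjoint_wordMap_image hinj hf hdisj n fun htail => hvw ?_
      rw [← Fin.cons_self_tail v, ← Fin.cons_self_tail w, h0, htail]
    · exact (hdisj h0).mono (image_mono (mapsTo_wordMap hf _).image_subset)
        (image_mono (mapsTo_wordMap hf _).image_subset)

variable [PseudoEMetricSpace X] {r : ℝ≥0}

lemma lipschitzWith_wordMap (hf : ∀ i, LipschitzWith r (f i)) :
    ∀ {n : ℕ} (w : Fin n → ι), LipschitzWith (r ^ n) (wordMap f w)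
  | 0, _ => by simpa only [pow_zero, wordMap] using LipschitzWith.id
  | n + 1, w => by
    simpa only [pow_succ', wordMap] using (hf (w 0)).comp (lipschitzWith_wordMap hf (Fin.tail w))

lemma antilipschitzWith_wordMap (hf : ∀ i, AntilipschitzWith r (f i)) :
    ∀ {n : ℕ} (w : Fin n → ι), AntilipschitzWith (r ^ n) (wordMap f w)
  | 0, _ => by simpa only [pow_zero, wordMap] using AntilipschitzWith.id
  | n + 1, w => by
    simpa only [pow_succ, wordMap] using (hf (w 0)).comp (antilipschitzWith_wordMap hf (Fin.tail w))

end Words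

section HausdorffMeasure

variable {ι X : Type*} [MetricSpace X] [MeasurableSpace X]
  {f : ι → X → X} {K : Set X} {r : ℝ≥0} {d : ℝ}

lemma hausdorffMeasure_le_ediam_rpow [BorelSpace X] [Fintype ι] (hd : 0 ≤ d) (hr : r < 1)
    (hf : ∀ i, LipschitzWith r (f i)) (hdim : Fintype.card ι * (r : ℝ≥0∞) ^ d ≤ 1)
    (hbdd : Bornology.IsBounded K) (hK : K ⊆ ⋃ i, f i '' K) :
    μH[d] K ≤ Metric.ediam K ^ d := by
  have hcell {n : ℕ} (w : Fin n → ι) :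
      Metric.ediam (wordMap f w '' K) ≤ (r : ℝ≥0∞) ^ n * Metric.ediam K := by
    simpa only [ENNReal.coe_pow] using (lipschitzWith_wordMap hf w).ediam_image_le K
  have hmesh : Tendsto (fun n => (r : ℝ≥0∞) ^ n * Metric.ediam K) atTop (𝓝 0) := by
    simpa only [zero_mul] using ENNReal.Tendsto.mul_const
      (ENNReal.tendsto_pow_atTop_nhds_zero_of_lt_one (by exact_mod_cast hr))
      (Or.inr hbdd.ediam_ne_top)
  have hsum (n : ℕ) :
      ∑ w : Fin n → ι, Metric.ediam (wordMap f w '' K) ^ d ≤ Metric.ediam K ^ d :=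
    calc ∑ w : Fin n → ι, Metric.ediam (wordMap f w '' K) ^ d
        ≤ ∑ _w : Fin n → ι, ((r : ℝ≥0∞) ^ n * Metric.ediam K) ^ d :=
          Finset.sum_le_sum fun w _ => ENNReal.rpow_le_rpow (hcell w) hd
      _ = (Fintype.card ι * (r : ℝ≥0∞) ^ d) ^ n * Metric.ediam K ^ d := by
          rw [Finset.sum_const, Finset.card_univ, Fintype.card_fun, Fintype.card_fin, nsmul_eq_mul,
            Nat.cast_pow, ENNReal.mul_rpow_of_nonneg _ _ hd, ← mul_assoc, mul_pow,
            ← ENNReal.rpow_natCast_mul, ← ENNReal.rpow_mul_natCast, mul_comm d]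
      _ ≤ Metric.ediam K ^ d := mul_le_of_le_one_left' (pow_le_one' hdim n)
  calc μH[d] K
      ≤ liminf (fun n => ∑ w : Fin n → ι, Metric.ediam (wordMap f w '' K) ^ d) atTop :=
        Measure.hausdorffMeasure_le_liminf_sum d K (fun n => (r : ℝ≥0∞) ^ n * Metric.ediam K) hmesh
          (fun n w => wordMap f w '' K) (.of_forall fun n w => hcell w)
          (.of_forall fun n => subset_iUnion_wordMap_image hK n)
    _ ≤ liminf (fun _ : ℕ => Metric.ediam K ^ d) atTop := liminf_le_liminf (.of_forall hsum)
    _ = Metric.ediam K ^ d := liminf_const _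

lemma measure_le_ediam_rpow {ν : Measure X} {C : ℝ≥0} (hd : 0 < d) (hr0 : 0 < r) (hr1 : r < 1)
    (hν : ∀ (k : ℕ) (s : Set X), Metric.ediam s ≤ (r : ℝ≥0∞) ^ k → ν s ≤ C * ((r : ℝ≥0∞) ^ d) ^ k)
    {s : Set X} (hs : Metric.ediam s ≤ 1) :
    ν s ≤ C / (r : ℝ≥0∞) ^ d * Metric.ediam s ^ d := by
  have hrd1 : (r : ℝ≥0∞) ^ d < 1 := ENNReal.rpow_lt_one (by exact_mod_cast hr1) hd
  by_cases h0 : Metric.ediam s = 0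
  · have hlim : Tendsto (fun k : ℕ => (C : ℝ≥0∞) * ((r : ℝ≥0∞) ^ d) ^ k) atTop (𝓝 (C * 0)) :=
      ENNReal.Tendsto.const_mul (ENNReal.tendsto_pow_atTop_nhds_zero_of_lt_one hrd1)
        (Or.inr ENNReal.coe_ne_top)
    rw [mul_zero] at hlim
    exact (ge_of_tendsto' hlim fun k => hν k s (h0.trans_le zero_le)).trans zero_le
  · lift Metric.ediam s to ℝ≥0 using (hs.trans_lt ENNReal.one_lt_top).ne with D hD
    obtain ⟨k, hk, hk'⟩ := exists_nat_pow_near_of_lt_one (by simpa [pos_iff_ne_zero] using h0)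
      (by exact_mod_cast hs) hr0 hr1
    have hrd0 : (r : ℝ≥0∞) ^ d ≠ 0 := (ENNReal.rpow_pos (by exact_mod_cast hr0) (by simp)).ne'
    calc ν s ≤ C * ((r : ℝ≥0∞) ^ d) ^ k := hν k s (by rw [← hD]; exact_mod_cast hk')
      _ = C / (r : ℝ≥0∞) ^ d * ((r : ℝ≥0∞) ^ d) ^ (k + 1) := by
          rw [pow_succ', ← mul_assoc, ENNReal.div_mul_cancel hrd0 hrd1.ne_top]
      _ = C / (r : ℝ≥0∞) ^ d * ((r : ℝ≥0∞) ^ (k + 1)) ^ d := by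
          rw [← ENNReal.rpow_mul_natCast, ← ENNReal.rpow_natCast_mul, mul_comm d]
      _ ≤ C / (r : ℝ≥0∞) ^ d * (D : ℝ≥0∞) ^ d := by gcongr; exact_mod_cast hk.le

lemma absolutelyContinuous_hausdorffMeasure [BorelSpace X] {ν : Measure X} {C : ℝ≥0}
    (hd : 0 < d) (hr0 : 0 < r) (hr1 : r < 1)
    (hν : ∀ (k : ℕ) (s : Set X), Metric.ediam s ≤ (r : ℝ≥0∞) ^ k → ν s ≤ C * ((r : ℝ≥0∞) ^ d) ^ k) :
    ν ≪ μH[d] := by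
  set C' := (C : ℝ≥0∞) / (r : ℝ≥0∞) ^ d
  have hC' : C' ≠ ∞ :=
    ENNReal.div_ne_top (by simp) (ENNReal.rpow_pos (by exact_mod_cast hr0) (by simp)).ne'
  have hle : C'⁻¹ • ν ≤ μH[d] := Measure.le_hausdorffMeasure d _ 1 one_pos fun s hs => by
    rw [Measure.smul_apply, smul_eq_mul]
    calc C'⁻¹ * ν s ≤ C'⁻¹ * (C' * Metric.ediam s ^ d) := by
          gcongr; exact measure_le_ediam_rpow hd hr0 hr1 hν hs
      _ ≤ Metric.ediam s ^ d := by
          rw [← mul_assoc]; exact mul_le_of_le_one_left' (ENNReal.inv_mul_le_one C')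
  exact (Measure.absolutelyContinuous_smul (ENNReal.inv_ne_zero.2 hC')).trans
    (Measure.absolutelyContinuous_of_le hle)

end HausdorffMeasure

section Coding

variable {ι X : Type*} {f : ι → X → X} {K : Set X} {r : ℝ≥0}

lemma exists_codingMap [Finite ι] [TopologicalSpace ι] [DiscreteTopology ι] [MetricSpace X]
    (hr : r < 1) (hf : ∀ i, LipschitzWith r (f i)) (hmaps : ∀ i, MapsTo (f i) K K)
    (hK : IsComplete K) (hne : K.Nonempty) :
    ∃ c : C(ℕ → ι, X), ∀ ω, c ω ∈ K ∧ c ω = f (ω 0) (c fun j => ω (j + 1)) := by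
  have := hK.completeSpace_coe
  have : Nonempty C(ℕ → ι, K) := ⟨.const _ hne.to_subtype.some⟩
  let F (i : ι) : K → K := (hmaps i).restrict (f i) K K
  have hF (i : ι) : LipschitzWith r (F i) := fun x y => hf i x y
  have hFcont : Continuous (Function.uncurry F) :=
    continuous_prod_of_discrete_left.2 fun i => (hF i).continuous
  let Φ (c : C(ℕ → ι, K)) : C(ℕ → ι, K) :=
    ⟨fun ω => F (ω 0) (c fun j => ω (j + 1)), hFcont.comp (by fun_prop :
      Continuous fun ω : ℕ → ι => (ω 0, c fun j => ω (j + 1)))⟩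
  have hΦ : ContractingWith r Φ := ⟨hr, LipschitzWith.of_dist_le_mul fun c c' =>
    (ContinuousMap.dist_le (by positivity)).2 fun ω => ((hF (ω 0)).dist_le_mul _ _).trans
      (mul_le_mul_of_nonneg_left (ContinuousMap.dist_apply_le_dist _) r.2)⟩
  obtain ⟨c, hc⟩ : ∃ c, Φ c = c := ⟨_, hΦ.fixedPoint_isFixedPt⟩
  exact ⟨⟨fun ω => c ω, by fun_prop⟩, fun ω =>
    ⟨(c ω).2, congrArg Subtype.val (DFunLike.congr_fun hc ω).symm⟩⟩

lemma codingMap_mem_wordMap_image {c : (ℕ → ι) → X}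
    (hc : ∀ ω, c ω ∈ K ∧ c ω = f (ω 0) (c fun j => ω (j + 1))) :
    ∀ (k : ℕ) (ω : ℕ → ι), c ω ∈ wordMap f (fun j : Fin k => ω j) '' K
  | 0, ω => ⟨c ω, (hc ω).1, rfl⟩
  | k + 1, ω => by
    obtain ⟨x, hx, hxc⟩ := codingMap_mem_wordMap_image hc k fun j => ω (j + 1)
    exact ⟨x, hx, by rw [(hc ω).2, ← hxc]; rfl⟩

lemma infinitePi_uniformOn_cylinder [Fintype ι] [Nonempty ι] [MeasurableSpace ι]
    [MeasurableSingletonClass ι] {k : ℕ} (w : Fin k → ι) :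
    Measure.infinitePi (fun _ : ℕ => ProbabilityTheory.uniformOn (univ : Set ι))
      {ω | (fun j : Fin k => ω j) = w} = (Fintype.card ι : ℝ≥0∞)⁻¹ ^ k := by
  obtain ⟨i₀⟩ := ‹Nonempty ι›
  have hset : {ω : ℕ → ι | (fun j : Fin k => ω j) = w} =
      Set.pi (Finset.range k) fun j => {if h : j < k then w ⟨j, h⟩ else i₀} := by
    ext ω
    simp only [mem_ofPred_eq, funext_iff, Fin.forall_iff, Set.mem_pi, Finset.coe_range, mem_Iio,
      mem_singleton_iff]
    exact forall₂_congr fun j hj => by rw [dif_pos hj]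
  rw [hset, Measure.infinitePi_pi _ fun _ _ => MeasurableSet.singleton _]
  simp only [ProbabilityTheory.uniformOn_univ, Measure.count_singleton, one_div, Finset.prod_const,
    Finset.card_range]

variable [Fintype ι]

/-- The words of length `k` whose cells, the images of `K`, meet the set `s`. -/
def cellsMeeting (f : ι → X → X) (K s : Set X) (k : ℕ) : Finset (Fin k → ι) :=
  {w | (wordMap f w '' K ∩ s).Nonempty}

lemma exists_measure_le_card_cellsMeeting [Nonempty ι] [MetricSpace X] [MeasurableSpace X]
    [BorelSpace X] (hr : r < 1) (hf : ∀ i, LipschitzWith r (f i))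
    (hmaps : ∀ i, MapsTo (f i) K K) (hK : IsComplete K) (hne : K.Nonempty) :
    ∃ ν : Measure X, ν K = 1 ∧ ∀ (k : ℕ) (s : Set X), MeasurableSet s →
      ν s ≤ (cellsMeeting f K s k).card * (Fintype.card ι : ℝ≥0∞)⁻¹ ^ k := by
  let : TopologicalSpace ι := ⊥
  have : DiscreteTopology ι := ⟨rfl⟩
  borelize ι
  obtain ⟨c, hc⟩ := exists_codingMap hr hf hmaps hK hne
  let P := Measure.infinitePi fun _ : ℕ => ProbabilityTheory.uniformOn (univ : Set ι)
  refine ⟨P.map c, ?_, fun k s hs => ?_⟩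
  · rw [Measure.map_apply c.continuous.measurable hK.isClosed.measurableSet,
      preimage_eq_univ_iff.2 (range_subset_iff.2 fun ω => (hc ω).1), measure_univ]
  · have hcover : c ⁻¹' s ⊆ ⋃ w ∈ cellsMeeting f K s k, {ω | (fun j : Fin k => ω j) = w} :=
      fun ω hω => mem_iUnion₂.2 ⟨fun j => ω j, Finset.mem_filter.2 ⟨Finset.mem_univ _,
        c ω, codingMap_mem_wordMap_image hc k ω, hω⟩, rfl⟩
    calc P.map c s = P (c ⁻¹' s) := Measure.map_apply c.continuous.measurable hs
      _ ≤ ∑ w ∈ cellsMeeting f K s k, P {ω | (fun j : Fin k => ω j) = w} :=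
          (measure_mono hcover).trans (measure_biUnion_finset_le _ _)
      _ = (cellsMeeting f K s k).card * (Fintype.card ι : ℝ≥0∞)⁻¹ ^ k := by
          rw [Finset.sum_congr rfl fun w _ => infinitePi_uniformOn_cylinder w, Finset.sum_const,
            nsmul_eq_mul]

lemma hausdorffMeasure_pos_of_card_cellsMeeting_le [MetricSpace X] [MeasurableSpace X]
    [BorelSpace X] {d : ℝ} {C : ℝ≥0} (hd : 0 < d) (hr0 : 0 < r) (hr1 : r < 1)
    (hf : ∀ i, LipschitzWith r (f i)) (hmaps : ∀ i, MapsTo (f i) K K) (hK : IsComplete K)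
    (hne : K.Nonempty) (hdim : 1 ≤ Fintype.card ι * (r : ℝ≥0∞) ^ d)
    (hcard : ∀ (k : ℕ) (s : Set X), Metric.ediam s ≤ (r : ℝ≥0∞) ^ k →
      ((cellsMeeting f K s k).card : ℝ≥0∞) ≤ C) :
    0 < μH[d] K := by
  have : Nonempty ι := Fintype.card_pos_iff.1 <| Nat.pos_of_ne_zero fun h => by simp [h] at hdim
  obtain ⟨ν, hνK, hν⟩ := exists_measure_le_card_cellsMeeting hr1 hf hmaps hK hne
  have hac : ν ≪ μH[d] := absolutelyContinuous_hausdorffMeasure hd hr0 hr1 fun k s hs =>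
    calc ν s ≤ ν (closure s) := measure_mono subset_closure
      _ ≤ (cellsMeeting f K (closure s) k).card * (Fintype.card ι : ℝ≥0∞)⁻¹ ^ k :=
          hν k _ isClosed_closure.measurableSet
      _ ≤ C * ((r : ℝ≥0∞) ^ d) ^ k :=
          mul_le_mul' (hcard k _ (by rwa [Metric.ediam_closure]))
            (pow_le_pow_left' (ENNReal.inv_le_iff_le_mul (by simp) (by simp) |>.2 hdim) k)
  refine pos_iff_ne_zero.2 fun h => ?_
  rw [hac h] at hνK
  exact zero_ne_one hνK

end Coding

section Similarity

variable {X : Type*} [MetricSpace X] [MeasurableSpace X] [BorelSpace X] {f : X → X} {r : ℝ≥0}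
  {d : ℝ}

lemma hausdorffMeasure_image_of_similarity (hd : 0 ≤ d) (hr : r ≠ 0) (hf : LipschitzWith r f)
    (hf' : AntilipschitzWith r⁻¹ f) (s : Set X) : μH[d] (f '' s) = (r : ℝ≥0∞) ^ d * μH[d] s := by
  refine le_antisymm (hf.lipschitzOnWith.hausdorffMeasure_image_le hd) ?_
  calc (r : ℝ≥0∞) ^ d * μH[d] s
      ≤ (r : ℝ≥0∞) ^ d * (((r⁻¹ : ℝ≥0) : ℝ≥0∞) ^ d * μH[d] (f '' s)) := by
        gcongr; exact hf'.le_hausdorffMeasure_image hd s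
    _ = μH[d] (f '' s) := by
        rw [← mul_assoc, ← ENNReal.mul_rpow_of_nonneg _ _ hd, ← ENNReal.coe_mul,
          mul_inv_cancel₀ hr, ENNReal.coe_one, ENNReal.one_rpow, one_mul]

variable [CompleteSpace X] {F : Type*} [NormedAddCommGroup F]

lemma measurableEmbedding_of_similarity (hf : LipschitzWith r f) (hf' : AntilipschitzWith r⁻¹ f) :
    MeasurableEmbedding f :=
  (hf'.isClosedEmbedding hf.uniformContinuous).measurableEmbedding

lemma comap_hausdorffMeasure_of_similarity (hd : 0 ≤ d) (hr : r ≠ 0) (hf : LipschitzWith r f)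
    (hf' : AntilipschitzWith r⁻¹ f) :
    (μH[d] : Measure X).comap f = (r : ℝ≥0∞) ^ d • μH[d] := by
  ext s -
  rw [(measurableEmbedding_of_similarity hf hf').comap_apply,
    hausdorffMeasure_image_of_similarity hd hr hf hf', Measure.smul_apply, smul_eq_mul]

lemma integrableOn_comp_of_similarity (hd : 0 ≤ d) (hr : r ≠ 0) (hf : LipschitzWith r f)
    (hf' : AntilipschitzWith r⁻¹ f) {g : X → F} {s : Set X}
    (hg : IntegrableOn g (f '' s) μH[d]) : IntegrableOn (fun x => g (f x)) s μH[d] := by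
  have hemb := measurableEmbedding_of_similarity hf hf'
  have h : IntegrableOn g (f '' s) ((Measure.comap f μH[d]).map f) := by
    rw [hemb.map_comap]
    exact hg.mono_measure Measure.restrict_le_self
  rw [hemb.integrableOn_map_iff, preimage_image_eq s hemb.injective,
    comap_hausdorffMeasure_of_similarity hd hr hf hf', IntegrableOn,
    Measure.restrict_smul, integrable_smul_measure
      (ENNReal.rpow_pos (by exact_mod_cast pos_iff_ne_zero.2 hr) (by simp)).ne'
      (ENNReal.rpow_ne_top_of_nonneg hd (by simp))] at h
  exact h

lemma setIntegral_image_of_similarity [NormedSpace ℝ F] (hd : 0 ≤ d) (hr : r ≠ 0)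
    (hf : LipschitzWith r f) (hf' : AntilipschitzWith r⁻¹ f) (g : X → F) (s : Set X) :
    ∫ y in f '' s, g y ∂μH[d] = (r : ℝ) ^ d • ∫ x in s, g (f x) ∂μH[d] := by
  have hemb := measurableEmbedding_of_similarity hf hf'
  calc ∫ y in f '' s, g y ∂μH[d] = ∫ y in f '' s, g y ∂(Measure.comap f μH[d]).map f := by
        rw [hemb.map_comap, Measure.restrict_restrict_of_subset (image_subset_range f s)]
    _ = ∫ x in s, g (f x) ∂(Measure.comap f μH[d]) := by
        rw [hemb.setIntegral_map, preimage_image_eq s hemb.injective]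
    _ = (r : ℝ) ^ d • ∫ x in s, g (f x) ∂μH[d] := by
        rw [comap_hausdorffMeasure_of_similarity hd hr hf hf', Measure.restrict_smul,
          integral_smul_measure, ← ENNReal.toReal_rpow, ENNReal.coe_toReal]

end Similarity

section OpenSetCondition

variable {ι E : Type*} {f : ι → E → E} {K U : Set E} {r : ℝ≥0}

lemma wordMap_image_subset_closedBall [Fintype ι] [PseudoMetricSpace E]
    (hf : ∀ i, LipschitzWith r (f i)) (hbdd : Bornology.IsBounded (K ∪ U)) {k : ℕ} {s : Set E}
    (hs : Metric.ediam s ≤ (r : ℝ≥0∞) ^ k) {y : E} (hy : y ∈ s) {w : Fin k → ι}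
    (hw : w ∈ cellsMeeting f K s k) :
    wordMap f w '' U ⊆ Metric.closedBall y ((Metric.diam (K ∪ U) + 1) * r ^ k) := by
  obtain ⟨_, ⟨x, hx, rfl⟩, hxs⟩ := (Finset.mem_filter.1 hw).2
  rintro _ ⟨u, hu, rfl⟩
  have hxy : dist (wordMap f w x) y ≤ r ^ k := by
    have h := (Metric.edist_le_ediam_of_mem hxs hy).trans hs
    rwa [edist_nndist, ← ENNReal.coe_pow, ENNReal.coe_le_coe] at h
  calc dist (wordMap f w u) y
      ≤ dist (wordMap f w u) (wordMap f w x) + dist (wordMap f w x) y := dist_triangle _ _ _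
    _ ≤ r ^ k * Metric.diam (K ∪ U) + r ^ k := by
        gcongr
        refine ((lipschitzWith_wordMap hf w).dist_le_mul u x).trans ?_
        rw [NNReal.coe_pow]
        gcongr
        exact Metric.dist_le_diam_of_mem hbdd (Or.inr hu) (Or.inl hx)
    _ = (Metric.diam (K ∪ U) + 1) * r ^ k := by ring

lemma hausdorffMeasure_biUnion_wordMap_image [MetricSpace E] [CompleteSpace E] [MeasurableSpace E]
    [BorelSpace E] {d : ℝ} (hd : 0 ≤ d) (hr : r ≠ 0) (hf : ∀ i, LipschitzWith r (f i))
    (hf' : ∀ i, AntilipschitzWith r⁻¹ (f i)) (hU : MeasurableSet U)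
    (hmaps : ∀ i, MapsTo (f i) U U) (hdisj : Pairwise fun i j => Disjoint (f i '' U) (f j '' U))
    {k : ℕ} (W : Finset (Fin k → ι)) :
    μH[d] (⋃ w ∈ W, wordMap f w '' U) = W.card * (((r : ℝ≥0∞) ^ k) ^ d * μH[d] U) := by
  have hlip (w : Fin k → ι) : LipschitzWith (r ^ k) (wordMap f w) := lipschitzWith_wordMap hf w
  have hanti (w : Fin k → ι) : AntilipschitzWith (r ^ k)⁻¹ (wordMap f w) :=
    inv_pow r k ▸ antilipschitzWith_wordMap hf' w
  have hpair : Pairwise fun v w : Fin k → ι => Disjoint (wordMap f v '' U) (wordMap f w '' U) :=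
    pairwise_disjoint_wordMap_image (fun i => (hf' i).injective) hmaps hdisj k
  rw [measure_biUnion_finset (hpair.pairwiseDisjoint _) fun w _ =>
      (measurableEmbedding_of_similarity (hlip w) (hanti w)).measurableSet_image.2 hU,
    Finset.sum_congr rfl fun w _ => hausdorffMeasure_image_of_similarity hd (pow_ne_zero k hr)
      (hlip w) (hanti w) U, Finset.sum_const, nsmul_eq_mul, ENNReal.coe_pow]

/-- Comparison of volumes: the cells of level `k` that meet `s` contain disjoint copies of `U`
scaled by `r ^ k`, and all of these lie in a ball of radius comparable to `r ^ k`. -/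
lemma exists_card_cellsMeeting_le [Fintype ι] [NormedAddCommGroup E] [NormedSpace ℝ E]
    [FiniteDimensional ℝ E] (hr : r ≠ 0) (hf : ∀ i, LipschitzWith r (f i))
    (hf' : ∀ i, AntilipschitzWith r⁻¹ (f i)) (hbdd : Bornology.IsBounded (K ∪ U))
    (hUo : IsOpen U) (hUne : U.Nonempty)
    (hmaps : ∀ i, MapsTo (f i) U U) (hdisj : Pairwise fun i j => Disjoint (f i '' U) (f j '' U)) :
    ∃ C : ℝ≥0, ∀ (k : ℕ) (s : Set E), Metric.ediam s ≤ (r : ℝ≥0∞) ^ k →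
      ((cellsMeeting f K s k).card : ℝ≥0∞) ≤ C := by
  borelize E
  have : CompleteSpace E := FiniteDimensional.complete ℝ E
  let n := Module.finrank ℝ E
  let m : Measure E := μH[n]
  have hU0 : m U ≠ 0 := (hUo.measure_pos m hUne).ne'
  have hUtop : m U ≠ ∞ := (hbdd.subset subset_union_right).measure_lt_top.ne
  let B := ENNReal.ofReal ((Metric.diam (K ∪ U) + 1) ^ n) * m (Metric.ball 0 1)
  have hB : B ≠ ∞ := ENNReal.mul_ne_top ENNReal.ofReal_ne_top measure_ball_lt_top.ne
  refine ⟨(B / m U).toNNReal, fun k s hs => ?_⟩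
  rw [ENNReal.coe_toNNReal (ENNReal.div_ne_top hB hU0),
    ENNReal.le_div_iff_mul_le (.inl hU0) (.inl hUtop)]
  obtain rfl | ⟨y, hy⟩ := s.eq_empty_or_nonempty
  · simp [cellsMeeting]
  have hrk0 : ((r : ℝ≥0∞) ^ k) ^ n ≠ 0 := pow_ne_zero _ (pow_ne_zero _ (by exact_mod_cast hr))
  have hrktop : ((r : ℝ≥0∞) ^ k) ^ n ≠ ∞ := ENNReal.pow_ne_top (ENNReal.pow_ne_top (by simp))
  have hofReal : ENNReal.ofReal (((r : ℝ) ^ k) ^ n) = ((r : ℝ≥0∞) ^ k) ^ n := by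
    rw [ENNReal.ofReal_pow (by positivity), ENNReal.ofReal_pow r.coe_nonneg,
      ENNReal.ofReal_coe_nnreal]
  refine (ENNReal.mul_le_mul_iff_right hrk0 hrktop).1 ?_
  calc ((r : ℝ≥0∞) ^ k) ^ n * ((cellsMeeting f K s k).card * m U)
      = m (⋃ w ∈ cellsMeeting f K s k, wordMap f w '' U) := by
        rw [hausdorffMeasure_biUnion_wordMap_image n.cast_nonneg hr hf hf' hUo.measurableSet hmaps
          hdisj, ENNReal.rpow_natCast, mul_left_comm]
    _ ≤ m (Metric.closedBall y ((Metric.diam (K ∪ U) + 1) * r ^ k)) :=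
        measure_mono (iUnion₂_subset fun w hw => wordMap_image_subset_closedBall hf hbdd hs hy hw)
    _ = ((r : ℝ≥0∞) ^ k) ^ n * B := by
        rw [Measure.addHaar_closedBall m y (by positivity), mul_pow,
          ENNReal.ofReal_mul (by positivity), hofReal, mul_comm (ENNReal.ofReal _), mul_assoc]

end OpenSetCondition

section CellAverage

variable {ι X F : Type*} [Fintype ι] [NormedAddCommGroup F] [NormedSpace ℝ F] {f : ι → X → X}
  {K : Set X} {r : ℝ≥0} {d : ℝ}

/-- The averaging operator of an iterated function system, the dual on functions of the operator
of which self-similar measures with equal weights are the fixed points. -/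
def cellAverage (f : ι → X → X) (g : X → F) (x : X) : F :=
  (Fintype.card ι : ℝ)⁻¹ • ∑ i, g (f i x)

lemma dist_cellAverage_le {g : X → F} {x y : X} {ε : ℝ} (hε : 0 ≤ ε)
    (h : ∀ i, dist (g (f i x)) (g (f i y)) ≤ ε) :
    dist (cellAverage f g x) (cellAverage f g y) ≤ ε := by
  calc dist (cellAverage f g x) (cellAverage f g y)
      = (Fintype.card ι : ℝ)⁻¹ * dist (∑ i, g (f i x)) (∑ i, g (f i y)) := by
        rw [cellAverage, cellAverage, dist_smul₀, norm_inv, RCLike.norm_natCast]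
    _ ≤ (Fintype.card ι : ℝ)⁻¹ * ∑ _i : ι, ε := by
        gcongr
        exact (dist_sum_sum_le _ _ _).trans (Finset.sum_le_sum fun i _ => h i)
    _ ≤ ε := by
        rw [Finset.sum_const, Finset.card_univ, nsmul_eq_mul, ← mul_assoc]
        exact mul_le_of_le_one_left hε (inv_mul_le_one)

lemma dist_iterate_cellAverage_le [PseudoMetricSpace X] (hf : ∀ i, LipschitzWith r (f i))
    (hmaps : ∀ i, MapsTo (f i) K K) {D ε : ℝ} (hε : 0 ≤ ε) (n : ℕ) {g : X → F}
    (hg : ∀ x ∈ K, ∀ y ∈ K, dist x y ≤ r ^ n * D → dist (g x) (g y) ≤ ε) :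
    ∀ x ∈ K, ∀ y ∈ K, dist x y ≤ D →
      dist ((cellAverage f)^[n] g x) ((cellAverage f)^[n] g y) ≤ ε := by
  induction n generalizing g with
  | zero =>
    simp only [pow_zero, one_mul] at hg
    exact hg
  | succ n ih =>
    refine ih fun x hx y hy hxy => dist_cellAverage_le hε fun i =>
      hg _ (hmaps i hx) _ (hmaps i hy) ?_
    calc dist (f i x) (f i y) ≤ r * dist x y := (hf i).dist_le_mul x y
      _ ≤ r * (r ^ n * D) := by gcongr
      _ = r ^ (n + 1) * D := by ring

lemma continuousOn_cellAverage [TopologicalSpace X] (hf : ∀ i, ContinuousOn (f i) K)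
    (hmaps : ∀ i, MapsTo (f i) K K) {g : X → F} (hg : ContinuousOn g K) :
    ContinuousOn (cellAverage f g) K :=
  (continuousOn_finsetSum _ fun i _ => hg.comp (hf i) (hmaps i)).const_smul _

lemma setIntegral_cellAverage [MetricSpace X] [CompleteSpace X] [MeasurableSpace X] [BorelSpace X]
    (hd : 0 ≤ d) (hr : r ≠ 0) (hf : ∀ i, LipschitzWith r (f i))
    (hf' : ∀ i, AntilipschitzWith r⁻¹ (f i)) (hdim : Fintype.card ι * (r : ℝ≥0∞) ^ d = 1)
    (hKm : MeasurableSet K) (hK : K = ⋃ i, f i '' K)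
    (hdisj : Pairwise fun i j => AEDisjoint μH[d] (f i '' K) (f j '' K)) {g : X → F}
    (hg : IntegrableOn g K μH[d]) :
    ∫ x in K, cellAverage f g x ∂μH[d] = ∫ x in K, g x ∂μH[d] := by
  have hgi (i : ι) : IntegrableOn (fun x => g (f i x)) K μH[d] :=
    integrableOn_comp_of_similarity hd hr (hf i) (hf' i)
      (hg.mono_set ((subset_iUnion (fun i => f i '' K) i).trans hK.ge))
  have hrd : (Fintype.card ι : ℝ)⁻¹ = (r : ℝ) ^ d := by
    rw [inv_eq_of_mul_eq_one_right]
    simpa [← ENNReal.toReal_rpow] using congrArg ENNReal.toReal hdim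
  calc ∫ x in K, cellAverage f g x ∂μH[d]
      = ∑ i, (r : ℝ) ^ d • ∫ x in K, g (f i x) ∂μH[d] := by
        simp only [cellAverage]
        rw [integral_smul, integral_finsetSum _ fun i _ => hgi i, hrd, Finset.smul_sum]
    _ = ∑ i, ∫ y in f i '' K, g y ∂μH[d] := Finset.sum_congr rfl fun i _ =>
        (setIntegral_image_of_similarity hd hr (hf i) (hf' i) g K).symm
    _ = ∫ y in ⋃ i, f i '' K, g y ∂μH[d] := by
        rw [integral_iUnion_ae (fun i => ((measurableEmbedding_of_similarity (hf i)
          (hf' i)).measurableSet_image.2 hKm).nullMeasurableSet) hdisj (hK ▸ hg), tsum_fintype]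
    _ = ∫ y in K, g y ∂μH[d] := by rw [← hK]

lemma tendstoUniformlyOn_iterate_cellAverage [MetricSpace X] [MeasurableSpace X] [CompleteSpace F]
    [OpensMeasurableSpace X] {μ : Measure X} (hr : r < 1) (hf : ∀ i, LipschitzWith r (f i))
    (hmaps : ∀ i, MapsTo (f i) K K) (hK : IsCompact K) (hμ0 : μ K ≠ 0) (hμ : μ K ≠ ∞)
    (hinv : ∀ g : X → F, ContinuousOn g K → ∫ x in K, cellAverage f g x ∂μ = ∫ x in K, g x ∂μ)
    {g : X → F} (hg : ContinuousOn g K) :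
    TendstoUniformlyOn (fun n => (cellAverage f)^[n] g) (fun _ => ⨍ y in K, g y ∂μ) atTop K := by
  have hcont (n : ℕ) : ContinuousOn ((cellAverage f)^[n] g) K := by
    induction n with
    | zero => exact hg
    | succ n ih =>
      rw [Function.iterate_succ_apply']
      exact continuousOn_cellAverage (fun i => (hf i).continuous.continuousOn) hmaps ih
  have havg (n : ℕ) : ⨍ y in K, (cellAverage f)^[n] g y ∂μ = ⨍ y in K, g y ∂μ := by
    induction n with
    | zero => rfl
    | succ n ih =>
      rw [← ih, Function.iterate_succ_apply', setAverage_eq, setAverage_eq, hinv _ (hcont n)]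
  refine Metric.tendstoUniformlyOn_iff.2 fun ε hε => ?_
  obtain ⟨δ, hδ, hosc⟩ := Metric.uniformContinuousOn_iff_le.1
    (hK.uniformContinuousOn_of_continuous hg) (ε / 2) (half_pos hε)
  have hmesh : Tendsto (fun n => (r : ℝ) ^ n * Metric.diam K) atTop (𝓝 0) := by
    simpa only [zero_mul] using
      (tendsto_pow_atTop_nhds_zero_of_lt_one r.coe_nonneg hr).mul_const (Metric.diam K)
  filter_upwards [hmesh.eventually_le_const hδ] with n hn x hx
  have hball : ∀ y ∈ K, (cellAverage f)^[n] g y ∈ Metric.closedBall ((cellAverage f)^[n] g x)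
      (ε / 2) := fun y hy =>
    dist_iterate_cellAverage_le hf hmaps (half_pos hε).le n
      (fun u hu v hv huv => hosc u hu v hv (huv.trans hn)) y hy x hx
      (Metric.dist_le_diam_of_mem hK.isBounded hy hx)
  have hmem := (convex_closedBall _ _).set_average_mem Metric.isClosed_closedBall hμ0 hμ
    (ae_restrict_of_forall_mem hK.measurableSet hball)
    ((hcont n).integrableOn_of_subset_isCompact hK hK.measurableSet Subset.rfl hμ)
  rw [havg n] at hmem
  exact (Metric.mem_closedBall.1 hmem).trans_lt (half_lt_self hε)

end CellAverage

section Simplex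

variable {ι E : Type*} [NormedAddCommGroup E] [NormedSpace ℝ E] {r : ℝ} {x y : E} {i j : ι}

lemma mapsTo_homothety_of_convex {s : Set E} {p : E} (hs : Convex ℝ s) (hp : p ∈ s)
    (hr0 : 0 ≤ r) (hr1 : r ≤ 1) : MapsTo (AffineMap.homothety p r) s s := fun x hx => by
  rw [AffineMap.homothety_eq_lineMap]
  exact hs.lineMap_mem hp hx ⟨hr0, hr1⟩

lemma mapsTo_homothety_interior_of_convex {s : Set E} {p : E} (hs : Convex ℝ s) (hp : p ∈ s)
    (hr0 : 0 < r) (hr1 : r ≤ 1) :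
    MapsTo (AffineMap.homothety p r) (interior s) (interior s) := fun x hx => by
  rw [AffineMap.homothety_eq_lineMap, AffineMap.lineMap_apply_module]
  exact hs.combo_self_interior_mem_interior hp hx (sub_nonneg.2 hr1) hr0 (sub_add_cancel 1 r)

lemma one_add_coord_le_of_homothety_eq (b : AffineBasis ι ℝ E) (hr0 : 0 < r) (hr : r ≤ 1 / 2)
    (hij : i ≠ j) (h : AffineMap.homothety (b i) r x = AffineMap.homothety (b j) r y) :
    1 + b.coord j y ≤ b.coord j x := by
  have hcoord := congrArg (b.coord j) h
  simp only [AffineMap.homothety_eq_lineMap, AffineMap.apply_lineMap, b.coord_apply_ne hij.symm,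
    b.coord_apply_eq, AffineMap.lineMap_apply_ring] at hcoord
  nlinarith

variable [Finite ι] (b : AffineBasis ι ℝ E)

lemma eq_vertex_of_one_le_coord (hx : x ∈ convexHull ℝ (range b)) (hj : 1 ≤ b.coord j x) :
    x = b j := by
  have := Fintype.ofFinite ι
  rw [b.convexHull_eq_nonneg_coord] at hx
  have hle (k : ι) : b.coord k (b j) ≤ b.coord k x := by
    obtain rfl | hkj := eq_or_ne k j
    · rwa [b.coord_apply_eq]
    · rw [b.coord_apply_ne hkj]
      exact hx k
  refine b.ext_elem fun k => ((Finset.sum_eq_sum_iff_of_le fun k _ => hle k).1 ?_ k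
    (Finset.mem_univ k)).symm
  rw [b.sum_coord_apply_eq_one, b.sum_coord_apply_eq_one]

lemma eq_vertex_of_homothety_eq (hr0 : 0 < r) (hr : r ≤ 1 / 2) (hij : i ≠ j)
    (hx : x ∈ convexHull ℝ (range b)) (hy : y ∈ convexHull ℝ (range b))
    (h : AffineMap.homothety (b i) r x = AffineMap.homothety (b j) r y) : x = b j := by
  refine eq_vertex_of_one_le_coord b hx ?_
  rw [b.convexHull_eq_nonneg_coord] at hy
  exact (le_add_of_nonneg_right (hy j)).trans (one_add_coord_le_of_homothety_eq b hr0 hr hij h)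

lemma pairwise_disjoint_homothety_image_interior (hr0 : 0 < r) (hr : r ≤ 1 / 2) :
    Pairwise fun i j => Disjoint
      (AffineMap.homothety (b i) r '' interior (convexHull ℝ (range b)))
      (AffineMap.homothety (b j) r '' interior (convexHull ℝ (range b))) := by
  refine fun i j hij => Set.disjoint_left.2 ?_
  rintro _ ⟨x, hx, rfl⟩ ⟨y, hy, hyx⟩
  have hle := one_add_coord_le_of_homothety_eq b hr0 hr hij hyx.symm
  have hxj : x = b j := eq_vertex_of_homothety_eq b hr0 hr hij (interior_subset hx)
    (interior_subset hy) hyx.symm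
  rw [b.interior_convexHull] at hy
  rw [hxj, b.coord_apply_eq] at hle
  exact (add_le_iff_nonpos_right 1).1 hle |>.not_gt (hy j)

end Simplex

section Gasket

lemma affineIndependent_ptA : AffineIndependent ℝ ptA := by
  rw [affineIndependent_iff_of_fintype]
  intro w hw hsum
  rw [Finset.weightedVSub_eq_linear_combination _ hw] at hsum
  have hx : w 1 + w 2 * 2⁻¹ = 0 := by
    simpa [Fin.sum_univ_three, ptA] using congrArg (fun v : Pt => v 0) hsum
  have hy : w 2 = 0 := by
    simpa [Fin.sum_univ_three, ptA] using congrArg (fun v : Pt => v 1) hsum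
  rw [Fin.sum_univ_three] at hw
  have h1 : w 1 = 0 := by linarith
  have h0 : w 0 = 0 := by linarith
  simp [Fin.forall_fin_succ, h0, h1, hy]

/-- The vertices of the initial triangle as an affine basis of the plane, whose coordinates are the
barycentric coordinates of the triangle. -/
def gasketBasis : AffineBasis (Fin 3) ℝ Pt :=
  ⟨ptA, affineIndependent_ptA,
    affineIndependent_ptA.affineSpan_eq_top_iff_card_eq_finrank_add_one.2 (by simp)⟩

lemma sgMap_eq_homothety (i : Fin 3) : sgMap i = AffineMap.homothety (gasketBasis i) (2⁻¹ : ℝ) := by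
  funext x
  change (2 : ℝ)⁻¹ • (x + ptA i) = (2 : ℝ)⁻¹ • (x - ptA i) + ptA i
  module

lemma dist_sgMap (i : Fin 3) (x y : Pt) : dist (sgMap i x) (sgMap i y) = 2⁻¹ * dist x y := by
  simp [sgMap, dist_smul₀]

lemma lipschitzWith_sgMap (i : Fin 3) : LipschitzWith 2⁻¹ (sgMap i) :=
  .of_dist_le_mul fun x y => (dist_sgMap i x y).le

lemma antilipschitzWith_sgMap (i : Fin 3) : AntilipschitzWith (2⁻¹)⁻¹ (sgMap i) :=
  .of_le_mul_dist fun x y => by simp [dist_sgMap]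

lemma sgMap_ptA (i : Fin 3) : sgMap i (ptA i) = ptA i := by
  rw [sgMap, ← two_smul ℝ, inv_smul_smul₀ two_ne_zero]

lemma sgMap_comm (i j : Fin 3) : sgMap i (ptA j) = sgMap j (ptA i) := by
  rw [sgMap, sgMap, add_comm]

lemma mem_Vn_zero {x : Pt} : x ∈ Vn 0 ↔ ∃ i, ptA i = x := by
  simp [Vn, Fin.exists_fin_succ, eq_comm]

lemma mem_Vn_succ {n : ℕ} {x : Pt} : x ∈ Vn (n + 1) ↔ ∃ i, ∃ y ∈ Vn n, sgMap i y = x := by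
  simp [Vn, Fin.exists_fin_succ]

lemma ptA_mem_Vn (n : ℕ) (i : Fin 3) : ptA i ∈ Vn n := by
  induction n with
  | zero => exact mem_Vn_zero.2 ⟨i, rfl⟩
  | succ n ih => exact mem_Vn_succ.2 ⟨i, ptA i, ih, sgMap_ptA i⟩

lemma ptA_mem_sg (i : Fin 3) : ptA i ∈ sg := Vn_subset_sg (ptA_mem_Vn 0 i)

lemma sg_subset_convexHull : sg ⊆ convexHull ℝ (range gasketBasis) := by
  have hVn (n : ℕ) : (Vn n : Set Pt) ⊆ convexHull ℝ (range gasketBasis) := by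
    induction n with
    | zero =>
      intro x hx
      obtain ⟨i, rfl⟩ := mem_Vn_zero.1 hx
      exact subset_convexHull ℝ _ (mem_range_self i)
    | succ n ih =>
      intro x hx
      obtain ⟨i, y, hy, rfl⟩ := mem_Vn_succ.1 hx
      rw [sgMap_eq_homothety]
      exact mapsTo_homothety_of_convex (convex_convexHull ℝ _)
        (subset_convexHull ℝ _ (mem_range_self i)) (by norm_num) (by norm_num) (ih hy)
  exact closure_minimal (iUnion_subset hVn) ((finite_range gasketBasis).isClosed_convexHull ℝ)

lemma isCompact_sg : IsCompact sg :=
  ((finite_range gasketBasis).isCompact_convexHull ℝ).of_isClosed_subset isClosed_closure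
    sg_subset_convexHull

lemma mapsTo_sgMap_sg (i : Fin 3) : MapsTo (sgMap i) sg sg := by
  refine MapsTo.closure (fun x hx => ?_) (lipschitzWith_sgMap i).continuous
  obtain ⟨n, hn⟩ := mem_iUnion.1 hx
  exact mem_iUnion.2 ⟨n + 1, mem_Vn_succ.2 ⟨i, x, hn, rfl⟩⟩

lemma sg_eq_iUnion_sgMap_image : sg = ⋃ i, sgMap i '' sg := by
  refine Subset.antisymm (closure_minimal (iUnion_subset fun n x hx => ?_) ?_)
    (iUnion_subset fun i => (mapsTo_sgMap_sg i).image_subset)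
  · cases n with
    | zero =>
      obtain ⟨i, rfl⟩ := mem_Vn_zero.1 hx
      exact mem_iUnion.2 ⟨i, ptA i, ptA_mem_sg i, sgMap_ptA i⟩
    | succ n =>
      obtain ⟨i, y, hy, rfl⟩ := mem_Vn_succ.1 hx
      exact mem_iUnion.2 ⟨i, y, Vn_subset_sg hy, rfl⟩
  · exact isClosed_iUnion_of_finite fun i =>
      (isCompact_sg.image (lipschitzWith_sgMap i).continuous).isClosed

lemma eq_ptA_of_sgMap_eq_sgMap {i j : Fin 3} (hij : i ≠ j) {x y : Pt} (hx : x ∈ sg) (hy : y ∈ sg)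
    (h : sgMap i x = sgMap j y) : x = ptA j := by
  rw [sgMap_eq_homothety, sgMap_eq_homothety] at h
  exact eq_vertex_of_homothety_eq gasketBasis (by norm_num) (by norm_num) hij
    (sg_subset_convexHull hx) (sg_subset_convexHull hy) h

/-- The Hausdorff dimension of the gasket. -/
abbrev sgDim : ℝ := Real.log 3 / Real.log 2

lemma sgDim_pos : 0 < sgDim := div_pos (Real.log_pos (by norm_num)) (Real.log_pos (by norm_num))

lemma card_mul_half_rpow_sgDim :
    (Fintype.card (Fin 3) : ℝ≥0∞) * ((2⁻¹ : ℝ≥0) : ℝ≥0∞) ^ sgDim = 1 := by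
  have h : (2 : ℝ≥0) ^ sgDim = 3 := NNReal.eq (Real.rpow_logb two_pos (by norm_num) three_pos)
  rw [← ENNReal.coe_rpow_of_nonneg _ sgDim_pos.le, NNReal.inv_rpow, h,
    ENNReal.coe_inv three_ne_zero]
  simpa using ENNReal.mul_inv_cancel three_ne_zero (by simp)

lemma pairwise_aedisjoint_sgMap_image :
    Pairwise fun i j => AEDisjoint μH[sgDim] (sgMap i '' sg) (sgMap j '' sg) := by
  intro i j hij
  have hsub : sgMap i '' sg ∩ sgMap j '' sg ⊆ {sgMap i (ptA j)} := by
    rintro _ ⟨⟨x, hx, rfl⟩, y, hy, hyx⟩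
    rw [eq_ptA_of_sgMap_eq_sgMap hij hx hy hyx.symm, mem_singleton_iff]
  have := Measure.nullSingletonClass_hausdorff Pt sgDim_pos
  exact measure_mono_null hsub (measure_singleton _)

lemma hausdorffMeasure_sg_lt_top : μH[sgDim] sg < ∞ :=
  (hausdorffMeasure_le_ediam_rpow sgDim_pos.le (by norm_num) lipschitzWith_sgMap
    card_mul_half_rpow_sgDim.le isCompact_sg.isBounded sg_eq_iUnion_sgMap_image.subset).trans_lt
    (ENNReal.rpow_lt_top_of_nonneg sgDim_pos.le isCompact_sg.isBounded.ediam_ne_top)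

lemma hausdorffMeasure_sg_pos : 0 < μH[sgDim] sg := by
  let Δ := convexHull ℝ (range gasketBasis)
  have hbdd : Bornology.IsBounded (sg ∪ interior Δ) :=
    ((finite_range gasketBasis).isCompact_convexHull ℝ).isBounded.subset
      (union_subset sg_subset_convexHull interior_subset)
  have hmaps (i : Fin 3) : MapsTo (sgMap i) (interior Δ) (interior Δ) := by
    rw [sgMap_eq_homothety]
    exact mapsTo_homothety_interior_of_convex (convex_convexHull ℝ _)
      (subset_convexHull ℝ _ (mem_range_self i)) (by norm_num) (by norm_num)
  have hdisj : Pairwise fun i j => Disjoint (sgMap i '' interior Δ) (sgMap j '' interior Δ) := by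
    simp only [sgMap_eq_homothety]
    exact pairwise_disjoint_homothety_image_interior gasketBasis (by norm_num) (by norm_num)
  obtain ⟨C, hC⟩ := exists_card_cellsMeeting_le (by norm_num) lipschitzWith_sgMap
    antilipschitzWith_sgMap hbdd isOpen_interior
    ⟨_, gasketBasis.centroid_mem_interior_convexHull⟩ hmaps hdisj
  exact hausdorffMeasure_pos_of_card_cellsMeeting_le sgDim_pos (by norm_num) (by norm_num)
    lipschitzWith_sgMap mapsTo_sgMap_sg isCompact_sg.isComplete ⟨_, ptA_mem_sg 0⟩
    card_mul_half_rpow_sgDim.ge hC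

end Gasket

section EmpiricalMeasures

lemma image_sgMap_Vn_inter {i j : Fin 3} (hij : i ≠ j) (n : ℕ) :
    (Vn n).image (sgMap i) ∩ (Vn n).image (sgMap j) = {sgMap i (ptA j)} := by
  ext x
  simp only [Finset.mem_inter, Finset.mem_image, Finset.mem_singleton]
  constructor
  · rintro ⟨⟨y, hy, rfl⟩, z, hz, hzy⟩
    rw [eq_ptA_of_sgMap_eq_sgMap hij (Vn_subset_sg hy) (Vn_subset_sg hz) hzy.symm]
  · rintro rfl
    exact ⟨⟨_, ptA_mem_Vn n j, rfl⟩, _, ptA_mem_Vn n i, sgMap_comm j i⟩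

lemma sum_Vn_succ {M : Type*} [AddCommGroup M] (g : Pt → M) (n : ℕ) :
    ∑ x ∈ Vn (n + 1), g x + (g (sgMap 0 (ptA 1)) + g (sgMap 0 (ptA 2)) + g (sgMap 1 (ptA 2))) =
      ∑ i, ∑ x ∈ Vn n, g (sgMap i x) := by
  have hcell (i : Fin 3) : ∑ x ∈ (Vn n).image (sgMap i), g x = ∑ x ∈ Vn n, g (sgMap i x) :=
    Finset.sum_image (antilipschitzWith_sgMap i).injective.injOn
  have hne : sgMap 0 (ptA 2) ≠ sgMap 1 (ptA 2) := fun h => by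
    have := eq_ptA_of_sgMap_eq_sgMap (by decide) (ptA_mem_sg 2) (ptA_mem_sg 2) h
    exact absurd (affineIndependent_ptA.injective this) (by decide)
  have h01 := Finset.sum_union_inter (s₁ := (Vn n).image (sgMap 0))
    (s₂ := (Vn n).image (sgMap 1)) (f := g)
  have h012 := Finset.sum_union_inter (s₁ := (Vn n).image (sgMap 0) ∪ (Vn n).image (sgMap 1))
    (s₂ := (Vn n).image (sgMap 2)) (f := g)
  rw [image_sgMap_Vn_inter (by decide), Finset.sum_singleton] at h01
  rw [Finset.union_inter_distrib_right, image_sgMap_Vn_inter (by decide),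
    image_sgMap_Vn_inter (by decide), Finset.sum_union (Finset.disjoint_singleton.2 hne),
    Finset.sum_singleton, Finset.sum_singleton] at h012
  calc ∑ x ∈ Vn (n + 1), g x + (g (sgMap 0 (ptA 1)) + g (sgMap 0 (ptA 2)) + g (sgMap 1 (ptA 2)))
      = ∑ x ∈ Vn (n + 1), g x + (g (sgMap 0 (ptA 2)) + g (sgMap 1 (ptA 2))) +
          g (sgMap 0 (ptA 1)) := by abel
    _ = ∑ i, ∑ x ∈ Vn n, g (sgMap i x) := by
        rw [Vn, h012, add_right_comm, h01, hcell, hcell, hcell, Fin.sum_univ_three]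

lemma two_mul_sum_Vn (g : Pt → ℝ) (n : ℕ) :
    2 * ∑ x ∈ Vn n, g x =
      3 ^ n * ∑ i, (cellAverage sgMap)^[n] g (ptA i) + ∑ i, g (ptA i) := by
  induction n generalizing g with
  | zero =>
    have hinj := affineIndependent_ptA.injective
    have hV : ∑ x ∈ Vn 0, g x = ∑ i, g (ptA i) := by
      rw [Fin.sum_univ_three, Vn, Finset.sum_insert, Finset.sum_pair, add_assoc]
      · exact hinj.ne (by decide)
      · simp [hinj.eq_iff]
    rw [hV, pow_zero, Function.iterate_zero, id, one_mul, two_mul]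
  | succ n ih =>
    have hT : ∑ i, ∑ x ∈ Vn n, g (sgMap i x) = 3 * ∑ x ∈ Vn n, cellAverage sgMap g x := by
      rw [Finset.sum_comm, Finset.mul_sum]
      simp [cellAverage]
    have hverts : 3 * ∑ i, cellAverage sgMap g (ptA i) = ∑ i, g (ptA i) +
        2 * (g (sgMap 0 (ptA 1)) + g (sgMap 0 (ptA 2)) + g (sgMap 1 (ptA 2))) := by
      simp only [cellAverage, Fin.sum_univ_three, sgMap_ptA, sgMap_comm 1 0, sgMap_comm 2 0,
        sgMap_comm 2 1, Fintype.card_fin, smul_eq_mul]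
      push_cast
      ring
    rw [Function.iterate_succ_apply, pow_succ]
    linear_combination 2 * (sum_Vn_succ g n) + 2 * hT + 3 * ih (cellAverage sgMap g) + hverts

lemma integral_empMeas (n : ℕ) (g : Pt → ℝ) :
    ∫ x, g x ∂(empMeas n) = 2⁻¹ * ∑ i, (cellAverage sgMap)^[n] g (ptA i) +
      2⁻¹ * (3 ^ n : ℝ)⁻¹ * ∑ i, g (ptA i) := by
  have hsum : ∫ x, g x ∂(empMeas n) = (3 ^ n : ℝ)⁻¹ * ∑ x ∈ Vn n, g x := by
    rw [empMeas, integral_smul_measure,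
      integral_finsetSum_measure fun x _ => integrable_dirac (by simp)]
    simp
  have h3 : (3 ^ n : ℝ)⁻¹ * 3 ^ n = 1 := inv_mul_cancel₀ (by positivity)
  rw [hsum]
  linear_combination 2⁻¹ * (3 ^ n : ℝ)⁻¹ * two_mul_sum_Vn g n +
    2⁻¹ * (∑ i, (cellAverage sgMap)^[n] g (ptA i)) * h3

lemma tendsto_integral_empMeas {g : Pt → ℝ} (hg : Continuous g) :
    Tendsto (fun n => ∫ x, g x ∂(empMeas n)) atTop (𝓝 (3 / 2 * ⨍ x in sg, g x ∂μH[sgDim])) := by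
  have hinv (g : Pt → ℝ) (hg : ContinuousOn g sg) :
      ∫ x in sg, cellAverage sgMap g x ∂μH[sgDim] = ∫ x in sg, g x ∂μH[sgDim] :=
    setIntegral_cellAverage sgDim_pos.le (by norm_num) lipschitzWith_sgMap antilipschitzWith_sgMap
      card_mul_half_rpow_sgDim isCompact_sg.measurableSet sg_eq_iUnion_sgMap_image
      pairwise_aedisjoint_sgMap_image (hg.integrableOn_of_subset_isCompact isCompact_sg
        isCompact_sg.measurableSet Subset.rfl hausdorffMeasure_sg_lt_top.ne)
  have hvertex (i : Fin 3) : Tendsto (fun n => (cellAverage sgMap)^[n] g (ptA i)) atTop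
      (𝓝 (⨍ x in sg, g x ∂μH[sgDim])) :=
    (tendstoUniformlyOn_iterate_cellAverage (by norm_num) lipschitzWith_sgMap mapsTo_sgMap_sg
      isCompact_sg hausdorffMeasure_sg_pos.ne' hausdorffMeasure_sg_lt_top.ne hinv
      hg.continuousOn).tendsto_at (ptA_mem_sg i)
  have hpow : Tendsto (fun n : ℕ => (3 ^ n : ℝ)⁻¹) atTop (𝓝 0) :=
    (tendsto_pow_atTop_atTop_of_one_lt (by norm_num)).inv_tendsto_atTop
  have hlim := ((tendsto_finsetSum Finset.univ fun i _ => hvertex i).const_mul 2⁻¹).add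
    ((hpow.const_mul 2⁻¹).mul_const (∑ i, g (ptA i)))
  simp only [integral_empMeas]
  convert hlim using 2
  rw [Finset.sum_const, Finset.card_univ, Fintype.card_fin, nsmul_eq_mul]
  push_cast
  ring

end EmpiricalMeasures

/-- With `d_f = log 3/log 2`: the `d_f`-dimensional Hausdorff measure of `V` is
positive and finite, and the measures `μₙ = 3⁻ⁿ Σ_{x∈Vₙ} δₓ` converge weakly to
`c · H^{d_f}|_V` for some constant `c ∈ (0,∞)`. -/
theorem statement12 :
    0 < μH[Real.log 3 / Real.log 2] sg ∧ μH[Real.log 3 / Real.log 2] sg < ∞ ∧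
    ∃ c : ℝ≥0∞, 0 < c ∧ c < ∞ ∧
      ∀ g : Pt →ᵇ ℝ,
        Tendsto (fun n => ∫ x, g x ∂(empMeas n)) atTop
          (𝓝 (∫ x, g x ∂(c • (μH[Real.log 3 / Real.log 2]).restrict sg))) := by
  have hpos := hausdorffMeasure_sg_pos
  have htop := hausdorffMeasure_sg_lt_top
  have hmass : 0 < (μH[sgDim] : Measure Pt).real sg := ENNReal.toReal_pos hpos.ne' htop.ne
  refine ⟨hpos, htop, .ofReal (3 / 2 / (μH[sgDim] : Measure Pt).real sg),
    ENNReal.ofReal_pos.2 (by positivity), ENNReal.ofReal_lt_top, fun g => ?_⟩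
  have hlim := tendsto_integral_empMeas g.continuous
  rwa [setAverage_eq, smul_eq_mul, ← mul_assoc, ← div_eq_mul_inv, ← smul_eq_mul,
    ← ENNReal.toReal_ofReal (by positivity : 0 ≤ 3 / 2 / (μH[sgDim] : Measure Pt).real sg),
    ← integral_smul_measure] at hlim

end
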